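/- Let G = (V,E) be a finite graph with strictly positive edge weights x, cluster weight q ≥ 1, and E' ⊆ E; for s > 0 let P^s be the random-cluster measure with weights s on E' and x off E'. Then for every nonempty increasing event A ⊆ {0,1}^E and all 0 < s₁ < s₂: P^{s₂}(A) / P^{s₁}(A) ≥ exp( ∫_{s₁}^{s₂} (1/(s(1+s))) Σ_{e ∈ E'} P^s(e ∈ Piv_A | A) ds ). -/

import Mathlib

noncomputable section
open scoped Classical BigOperators

namespace RandomCluster

variable {V : Type*} [Fintype V] [DecidableEq V]

/-- A percolation configuration on the edge set `E`. -/
def Config (E : Finset (Sym2 V)) : Type _ := {e : Sym2 V // e ∈ E} → Bool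

instance (E : Finset (Sym2 V)) : Fintype (Config E) := by unfold Config; infer_instance

/-- The set of open edges of a configuration. -/
def openEdges {E : Finset (Sym2 V)} (ω : Config E) : Set (Sym2 V) :=
  {e | ∃ h : e ∈ E, ω ⟨e, h⟩ = true}

/-- `κ(ω)`: the number of connected components of the spanning subgraph of open edges
(isolated vertices included). -/
def kappa {E : Finset (Sym2 V)} (ω : Config E) : ℕ :=
  Nat.card (SimpleGraph.fromEdgeSet (openEdges ω)).ConnectedComponent

/-- The (unnormalized) random-cluster weight. -/
def weight (E : Finset (Sym2 V)) (x : Sym2 V → ℝ) (q : ℝ) (ω : Config E) : ℝ :=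
  q ^ kappa ω * ∏ e : {e : Sym2 V // e ∈ E}, (if ω e then x e.1 else 1)

/-- The partition function. -/
def Z (E : Finset (Sym2 V)) (x : Sym2 V → ℝ) (q : ℝ) : ℝ :=
  ∑ ω : Config E, weight E x q ω

/-- The random-cluster probability measure. -/
def prob (E : Finset (Sym2 V)) (x : Sym2 V → ℝ) (q : ℝ) (ω : Config E) : ℝ :=
  weight E x q ω / Z E x q

/-- The random-cluster measure conditioned on `{ω : ω e = i}`. -/
def condProb (E : Finset (Sym2 V)) (x : Sym2 V → ℝ) (q : ℝ) (e : {e : Sym2 V // e ∈ E})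
    (i : Bool) (ω : Config E) : ℝ :=
  if ω e = i then prob E x q ω / (∑ η : Config E, if η e = i then prob E x q η else 0) else 0

end RandomCluster


namespace RandomCluster

variable {V : Type*} [Fintype V] [DecidableEq V]

/-- The weights modified to equal `s` on every edge of `E'`. -/
def modWeights (E' : Finset (Sym2 V)) (x : Sym2 V → ℝ) (s : ℝ) : Sym2 V → ℝ :=
  fun e => if e ∈ E' then s else x e

/-- An event is increasing if it is stable under opening more edges. -/
def Increasing {E : Finset (Sym2 V)} (A : Set (Config E)) : Prop :=
  ∀ ω ω' : Config E, (∀ f, ω f ≤ ω' f) → ω ∈ A → ω' ∈ A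

/-- The edge `e` is pivotal for `A` in `ω`: exactly one of the two configurations agreeing
with `ω` off `e` lies in `A`. -/
def Pivotal {E : Finset (Sym2 V)} (A : Set (Config E)) (e : {e : Sym2 V // e ∈ E})
    (ω : Config E) : Prop :=
  Xor' (Function.update ω e true ∈ A) (Function.update ω e false ∈ A)

/-- `P^s(A)` for the measure with weights `s` on `E'` and `x` elsewhere. -/
def probOf (E E' : Finset (Sym2 V)) (x : Sym2 V → ℝ) (q s : ℝ) (A : Set (Config E)) : ℝ :=
  ∑ ω : Config E, (if ω ∈ A then prob E (modWeights E' x s) q ω else 0)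

/-- `P^s(e ∈ Piv_A | A)`. -/
def condPiv (E E' : Finset (Sym2 V)) (x : Sym2 V → ℝ) (q s : ℝ) (A : Set (Config E))
    (e : {e : Sym2 V // e ∈ E}) : ℝ :=
  (∑ ω : Config E, (if ω ∈ A ∧ Pivotal A e ω then prob E (modWeights E' x s) q ω else 0)) /
    probOf E E' x q s A

end RandomCluster

/-!
Write `P = P^s`. Differentiating the weights gives `d/ds log P(A) = s⁻¹ ∑ Cov(A, e open) / P(A)`,
summed over `e ∈ E'`, so it suffices to bound `P(A, e pivotal)` by `(1 + s) Cov(A, e open)` and to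
integrate. Let `B ⊆ A` consist of the configurations that remain in `A` once `e` is closed. Both `B`
and `{e open}` are increasing, so they are positively correlated by the FKG inequality, while
`A \ B = A ∩ {e pivotal}` is contained in `{e open}`; hence `Cov(A, e open)` is at least
`P(A, e pivotal) P(e closed)`. Closing `e` loses a factor of at most `s` in weight, which gives
`P(e closed) ≥ 1 / (1 + s)`. The lattice condition behind FKG is the supermodularity of `κ`, which
holds because `κ` is the dimension of the space of functions constant along open edges.
-/

namespace RandomCluster

section ConnectedComponents

variable {V : Type*}

/-- The space of real functions on the vertices of `G` that take equal values at the two ends of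
every edge. Its dimension is the number of connected components of `G`. -/
def edgeConstant (G : SimpleGraph V) : Submodule ℝ (V → ℝ) where
  carrier := {f | ∀ i j, G.Adj i j → f i = f j}
  add_mem' hf hg i j hij := congrArg₂ (· + ·) (hf i j hij) (hg i j hij)
  zero_mem' _ _ _ := rfl
  smul_mem' c _ hf i j hij := congrArg (c * ·) (hf i j hij)

lemma edgeConstant_anti : Antitone (edgeConstant (V := V)) :=
  fun _ _ hGH _ hf i j hij => hf i j (hGH hij)

lemma edgeConstant_sup (G H : SimpleGraph V) :
    edgeConstant (G ⊔ H) = edgeConstant G ⊓ edgeConstant H :=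
  le_antisymm (le_inf (edgeConstant_anti le_sup_left) (edgeConstant_anti le_sup_right))
    fun _ hf i j hij => hij.elim (hf.1 i j) (hf.2 i j)

lemma finrank_edgeConstant [Finite V] (G : SimpleGraph V) :
    Module.finrank ℝ (edgeConstant G) = Nat.card G.ConnectedComponent := by
  have := Fintype.ofFinite V
  have ker_eq : (G.lapMatrix ℝ).toLin'.ker = edgeConstant G := by
    ext f
    rw [LinearMap.mem_ker, Matrix.toLin'_apply]
    exact G.lapMatrix_mulVec_eq_zero_iff_forall_adj
  rw [← ker_eq, ← G.card_connectedComponent_eq_finrank_ker_toLin'_lapMatrix,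
    Nat.card_eq_fintype_card]

lemma card_connectedComponent_anti [Finite V] :
    Antitone fun G : SimpleGraph V => Nat.card G.ConnectedComponent := fun G H hGH => by
  simpa only [finrank_edgeConstant] using Submodule.finrank_mono (edgeConstant_anti hGH)

lemma card_connectedComponent_supermodular [Finite V] (G H : SimpleGraph V) :
    Nat.card G.ConnectedComponent + Nat.card H.ConnectedComponent ≤
      Nat.card (G ⊓ H).ConnectedComponent + Nat.card (G ⊔ H).ConnectedComponent := by
  simp only [← finrank_edgeConstant]
  rw [edgeConstant_sup, ← Submodule.finrank_sup_add_finrank_inf_eq]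
  have sup_le_inf : edgeConstant G ⊔ edgeConstant H ≤ edgeConstant (G ⊓ H) :=
    sup_le (edgeConstant_anti inf_le_left) (edgeConstant_anti inf_le_right)
  exact Nat.add_le_add_right (Submodule.finrank_mono sup_le_inf) _

end ConnectedComponents

section Mass

variable {α : Type*} [Fintype α]

/-- The total weight `μ(A) = ∑_{a ∈ A} μ(a)` that a weight function `μ` on a finite type gives to
the event `A`; `μ` need not be normalized. -/
def mass (μ : α → ℝ) (A : Set α) : ℝ := ∑ a, A.indicator μ a

/-- The covariance `μ(A ∩ B) - μ(A) μ(B)` of two events; it has this meaning when `μ` has total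
mass `1`. -/
def covariance (μ : α → ℝ) (A B : Set α) : ℝ := mass μ (A ∩ B) - mass μ A * mass μ B

lemma mass_univ (μ : α → ℝ) : mass μ Set.univ = ∑ a, μ a := by
  simp only [mass, Set.indicator_univ]

lemma mass_div_const (μ : α → ℝ) (c : ℝ) (A : Set α) :
    mass (fun a => μ a / c) A = mass μ A / c := by
  simp only [mass, Finset.sum_mul, div_eq_mul_inv, Set.indicator_mul_const]

lemma mass_inter_add_mass_diff (μ : α → ℝ) (A B : Set α) :
    mass μ (A ∩ B) + mass μ (A \ B) = mass μ A := by
  simp only [mass, ← Finset.sum_add_distrib]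
  refine Finset.sum_congr rfl fun a _ => ?_
  by_cases hA : a ∈ A <;> by_cases hB : a ∈ B <;> simp [hA, hB]

lemma mass_nonneg {μ : α → ℝ} (hμ : 0 ≤ μ) (A : Set α) : 0 ≤ mass μ A :=
  Finset.sum_nonneg fun a _ => Set.indicator_nonneg (fun a _ => hμ a) a

lemma mass_pos {μ : α → ℝ} (hμ : ∀ a, 0 < μ a) {A : Set α} (hA : A.Nonempty) : 0 < mass μ A := by
  obtain ⟨a, ha⟩ := hA
  exact Finset.sum_pos' (fun b _ => Set.indicator_nonneg (fun b _ => (hμ b).le) b)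
    ⟨a, Finset.mem_univ a, by simpa only [Set.indicator_of_mem ha] using hμ a⟩

lemma mass_le_mul_mass_of_injOn {β : Type*} [Fintype β] {μ : α → ℝ} {ν : β → ℝ} {c : ℝ}
    {A : Set α} {B : Set β} {f : α → β} (hν : 0 ≤ ν) (hc : 0 ≤ c) (hf : Set.MapsTo f A B)
    (hinj : Set.InjOn f A) (hle : ∀ a ∈ A, μ a ≤ c * ν (f a)) :
    mass μ A ≤ c * mass ν B := by
  simp only [mass, Set.indicator_apply, ← Finset.sum_filter]
  calc ∑ a with a ∈ A, μ a
      ≤ ∑ a with a ∈ A, c * ν (f a) :=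
        Finset.sum_le_sum fun a ha => hle a (Finset.mem_filter_univ a |>.mp ha)
    _ = c * ∑ b ∈ Finset.image f {a | a ∈ A}, ν b := by
        rw [Finset.sum_image (by simpa using hinj), Finset.mul_sum]
    _ ≤ c * ∑ b with b ∈ B, ν b := by
        gcongr
        · exact fun b _ _ => hν b
        · simpa [Finset.image_subset_iff, Set.MapsTo] using hf

variable [DistribLattice α] {μ : α → ℝ} {A B U : Set α}

lemma mass_mul_mass_le_of_isUpperSet (hμ₀ : 0 ≤ μ)
    (hμ : ∀ a b, μ a * μ b ≤ μ (a ⊓ b) * μ (a ⊔ b)) (hA : IsUpperSet A) (hB : IsUpperSet B) :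
    mass μ A * mass μ B ≤ mass μ Set.univ * mass μ (A ∩ B) := by
  have nonneg (S : Set α) : 0 ≤ S.indicator μ := Set.indicator_nonneg fun a _ => hμ₀ a
  refine four_functions_theorem_univ _ _ _ _ (nonneg A) (nonneg B) (nonneg _) (nonneg _)
    fun a b => ?_
  by_cases ha : a ∈ A
  · by_cases hb : b ∈ B
    · have hab : a ⊔ b ∈ A ∩ B := ⟨hA le_sup_left ha, hB le_sup_right hb⟩
      simpa only [Set.indicator_of_mem ha, Set.indicator_of_mem hb, Set.indicator_of_mem hab,
        Set.indicator_univ] using hμ a b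
    · rw [Set.indicator_of_notMem hb, mul_zero]
      exact mul_nonneg (nonneg _ _) (nonneg _ _)
  · rw [Set.indicator_of_notMem ha, zero_mul]
    exact mul_nonneg (nonneg _ _) (nonneg _ _)

lemma mass_diff_mul_mass_compl_le (hμ₀ : 0 ≤ μ)
    (hμ : ∀ a b, μ a * μ b ≤ μ (a ⊓ b) * μ (a ⊔ b)) (hB : IsUpperSet B) (hU : IsUpperSet U)
    (hBA : B ⊆ A) (hAU : A \ B ⊆ U) :
    mass μ (A \ B) * mass μ Uᶜ ≤ mass μ Set.univ * mass μ (A ∩ U) - mass μ A * mass μ U := by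
  have fkg := mass_mul_mass_le_of_isUpperSet hμ₀ hμ hB hU
  have split_A : mass μ B + mass μ (A \ B) = mass μ A := by
    simpa only [Set.inter_eq_right.mpr hBA] using mass_inter_add_mass_diff μ A B
  have split_AU : mass μ (B ∩ U) + mass μ (A \ B) = mass μ (A ∩ U) := by
    have inter_eq : A ∩ U ∩ B = B ∩ U := by grind
    have diff_eq : (A ∩ U) \ B = A \ B := by grind
    simpa only [inter_eq, diff_eq] using mass_inter_add_mass_diff μ (A ∩ U) B
  have split_univ : mass μ U + mass μ Uᶜ = mass μ Set.univ := by
    simpa only [Set.univ_inter, ← Set.compl_eq_univ_sdiff] using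
      mass_inter_add_mass_diff μ Set.univ U
  rw [← split_AU, ← split_A]
  linear_combination fkg + mass μ (A \ B) * split_univ

end Mass

section Configurations

variable {V : Type*} {E : Finset (Sym2 V)}

instance : DistribLattice (Config E) :=
  inferInstanceAs (DistribLattice ({e : Sym2 V // e ∈ E} → Bool))

lemma Increasing.isUpperSet {A : Set (Config E)} (hA : Increasing A) : IsUpperSet A :=
  fun ω η h => hA ω η h

/-- The event that the edge `e` is open. -/
def edgeOpen (e : {e : Sym2 V // e ∈ E}) : Set (Config E) := {ω | ω e = true}

lemma isUpperSet_edgeOpen (e : {e : Sym2 V // e ∈ E}) : IsUpperSet (edgeOpen e) :=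
  fun _ _ h hω => Bool.eq_true_of_true_le (hω ▸ h e)

lemma openEdges_inf (ω η : Config E) : openEdges (ω ⊓ η) = openEdges ω ∩ openEdges η := by
  ext e
  have inf_apply (he : e ∈ E) : (ω ⊓ η) ⟨e, he⟩ = (ω ⟨e, he⟩ && η ⟨e, he⟩) := rfl
  by_cases he : e ∈ E <;> simp [openEdges, inf_apply, he]

lemma openEdges_sup (ω η : Config E) : openEdges (ω ⊔ η) = openEdges ω ∪ openEdges η := by
  ext e
  have sup_apply (he : e ∈ E) : (ω ⊔ η) ⟨e, he⟩ = (ω ⟨e, he⟩ || η ⟨e, he⟩) := rfl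
  by_cases he : e ∈ E <;> simp [openEdges, sup_apply, he]

lemma openEdges_mono : Monotone (openEdges (E := E)) := fun ω η h => by
  rw [← sup_eq_right.mpr h, openEdges_sup]
  exact Set.subset_union_left

lemma kappa_anti [Finite V] : Antitone (kappa (E := E)) := fun _ _ h =>
  card_connectedComponent_anti (SimpleGraph.fromEdgeSet_mono (openEdges_mono h))

lemma kappa_supermodular [Finite V] (ω η : Config E) :
    kappa ω + kappa η ≤ kappa (ω ⊓ η) + kappa (ω ⊔ η) := by
  rw [kappa, kappa, kappa, kappa, openEdges_inf, openEdges_sup,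
    SimpleGraph.fromEdgeSet_inter, SimpleGraph.fromEdgeSet_union]
  exact card_connectedComponent_supermodular _ _

end Configurations

section CloseEdge

variable {V : Type*} [DecidableEq V] {E : Finset (Sym2 V)}

/-- The configuration obtained from `ω` by closing the edge `e`. -/
def closeEdge (e : {e : Sym2 V // e ∈ E}) (ω : Config E) : Config E := Function.update ω e false

lemma closeEdge_self (e : {e : Sym2 V // e ∈ E}) (ω : Config E) : closeEdge e ω e = false :=
  Function.update_self ..

lemma closeEdge_of_ne {e f : {e : Sym2 V // e ∈ E}} (h : f ≠ e) (ω : Config E) :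
    closeEdge e ω f = ω f :=
  Function.update_of_ne h ..

lemma closeEdge_le (e : {e : Sym2 V // e ∈ E}) (ω : Config E) : closeEdge e ω ≤ ω :=
  update_le_self_iff.mpr (Bool.false_le _)

lemma closeEdge_mono (e : {e : Sym2 V // e ∈ E}) : Monotone (closeEdge e) :=
  fun _ _ h => update_le_update_iff.mpr ⟨le_rfl, fun f _ => h f⟩

lemma closeEdge_eq_self {e : {e : Sym2 V // e ∈ E}} {ω : Config E} (h : ω ∉ edgeOpen e) :
    closeEdge e ω = ω :=
  Function.update_eq_self_iff.mpr (Bool.eq_false_of_not_eq_true h).symm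

lemma injOn_closeEdge (e : {e : Sym2 V // e ∈ E}) : Set.InjOn (closeEdge e) (edgeOpen e) := by
  intro ω (hω : ω e = true) η (hη : η e = true) h
  funext f
  rcases eq_or_ne f e with rfl | hf
  · rw [hω, hη]
  · rw [← closeEdge_of_ne hf ω, h, closeEdge_of_ne hf]

lemma inter_pivotal_eq_diff {A : Set (Config E)} (hA : Increasing A)
    (e : {e : Sym2 V // e ∈ E}) : A ∩ {ω | Pivotal A e ω} = A \ closeEdge e ⁻¹' A := by
  ext ω
  refine and_congr_right fun hω => ?_
  have open_mem : (Function.update ω e true : Config E) ∈ A :=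
    hA ω _ (le_update_self_iff.mpr (Bool.le_true _)) hω
  exact ⟨fun h => h.elim And.right fun h => absurd open_mem h.2, fun h => Or.inl ⟨open_mem, h⟩⟩

lemma diff_closeEdge_preimage_subset (A : Set (Config E)) (e : {e : Sym2 V // e ∈ E}) :
    A \ closeEdge e ⁻¹' A ⊆ edgeOpen e := by
  rintro ω ⟨hω, hclose⟩
  by_contra h
  exact hclose (by rwa [Set.mem_preimage, closeEdge_eq_self h])

end CloseEdge

section Weight

variable {V : Type*} {E : Finset (Sym2 V)} {y : Sym2 V → ℝ} {q : ℝ}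

/-- The product of the weights of the open edges, that is, the random-cluster weight without its
factor `q ^ κ(ω)`. -/
def edgeWeight (y : Sym2 V → ℝ) (ω : Config E) : ℝ :=
  ∏ e : {e : Sym2 V // e ∈ E}, (if ω e then y e else 1)

lemma weight_eq_mul_edgeWeight (y : Sym2 V → ℝ) (q : ℝ) (ω : Config E) :
    weight E y q ω = q ^ kappa ω * edgeWeight y ω :=
  rfl

lemma edgeWeight_pos (hy : ∀ e ∈ E, 0 < y e) (ω : Config E) : 0 < edgeWeight y ω := by
  refine Finset.prod_pos fun e _ => ?_
  split_ifs
  exacts [hy e e.2, one_pos]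

lemma weight_pos (hy : ∀ e ∈ E, 0 < y e) (hq : 0 < q) (ω : Config E) : 0 < weight E y q ω :=
  mul_pos (pow_pos hq _) (edgeWeight_pos hy ω)

lemma edgeWeight_mul_edgeWeight (y : Sym2 V → ℝ) (ω η : Config E) :
    edgeWeight y ω * edgeWeight y η = edgeWeight y (ω ⊓ η) * edgeWeight y (ω ⊔ η) := by
  simp only [edgeWeight, ← Finset.prod_mul_distrib]
  refine Finset.prod_congr rfl fun e _ => ?_
  have inf_apply : (ω ⊓ η) e = (ω e && η e) := rfl
  have sup_apply : (ω ⊔ η) e = (ω e || η e) := rfl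
  cases hω : ω e <;> cases hη : η e <;> simp [inf_apply, sup_apply, hω, hη]

lemma weight_mul_weight_le [Finite V] (hy : ∀ e ∈ E, 0 < y e) (hq : 1 ≤ q) (ω η : Config E) :
    weight E y q ω * weight E y q η ≤ weight E y q (ω ⊓ η) * weight E y q (ω ⊔ η) := by
  simp only [weight_eq_mul_edgeWeight]
  rw [mul_mul_mul_comm, mul_mul_mul_comm (q ^ kappa (ω ⊓ η)), ← pow_add, ← pow_add,
    ← edgeWeight_mul_edgeWeight]
  exact mul_le_mul_of_nonneg_right (pow_le_pow_right₀ hq (kappa_supermodular ω η))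
    (mul_pos (edgeWeight_pos hy ω) (edgeWeight_pos hy η)).le

variable [DecidableEq V]

lemma edgeWeight_eq_mul_closeEdge (y : Sym2 V → ℝ) {e : {e : Sym2 V // e ∈ E}} {ω : Config E}
    (h : ω ∈ edgeOpen e) : edgeWeight y ω = y e * edgeWeight y (closeEdge e ω) := by
  have h : ω e = true := h
  simp only [edgeWeight, ← Finset.mul_prod_erase _ _ (Finset.mem_univ e), h, closeEdge_self,
    if_true, Bool.false_eq_true, if_false, one_mul]
  congr 1
  exact Finset.prod_congr rfl fun f hf => by rw [closeEdge_of_ne (Finset.ne_of_mem_erase hf)]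

lemma weight_le_mul_weight_closeEdge [Finite V] (hy : ∀ e ∈ E, 0 < y e) (hq : 1 ≤ q)
    {e : {e : Sym2 V // e ∈ E}} {ω : Config E} (h : ω ∈ edgeOpen e) :
    weight E y q ω ≤ y e * weight E y q (closeEdge e ω) := by
  have kappa_le := kappa_anti (closeEdge_le e ω)
  have edgeWeight_pos := edgeWeight_pos hy (closeEdge e ω)
  have hye := hy e e.2
  simp only [weight_eq_mul_edgeWeight]
  rw [edgeWeight_eq_mul_closeEdge y h, mul_left_comm]
  gcongr

end Weight

section Prob

variable {V : Type*} [DecidableEq V] {E : Finset (Sym2 V)} {y : Sym2 V → ℝ} {q : ℝ}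

lemma mass_weight_univ (E : Finset (Sym2 V)) (y : Sym2 V → ℝ) (q : ℝ) :
    mass (weight E y q) Set.univ = Z E y q :=
  mass_univ _

lemma Z_pos (hy : ∀ e ∈ E, 0 < y e) (hq : 0 < q) : 0 < Z E y q :=
  mass_weight_univ E y q ▸ mass_pos (weight_pos hy hq) ⟨fun _ => true, trivial⟩

lemma mass_prob (A : Set (Config E)) :
    mass (prob E y q) A = mass (weight E y q) A / Z E y q :=
  mass_div_const ..

lemma prob_pos (hy : ∀ e ∈ E, 0 < y e) (hq : 0 < q) (ω : Config E) : 0 < prob E y q ω :=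
  div_pos (weight_pos hy hq ω) (Z_pos hy hq)

lemma mass_prob_univ (hy : ∀ e ∈ E, 0 < y e) (hq : 0 < q) :
    mass (prob E y q) Set.univ = 1 := by
  rw [mass_prob, mass_weight_univ, div_self (Z_pos hy hq).ne']

variable [Finite V]

lemma prob_mul_prob_le (hy : ∀ e ∈ E, 0 < y e) (hq : 1 ≤ q) (ω η : Config E) :
    prob E y q ω * prob E y q η ≤ prob E y q (ω ⊓ η) * prob E y q (ω ⊔ η) := by
  have hZ := Z_pos hy (one_pos.trans_le hq)
  simp only [prob, div_mul_div_comm]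
  exact div_le_div_of_nonneg_right (weight_mul_weight_le hy hq ω η) (mul_pos hZ hZ).le

lemma mass_prob_edgeOpen_le (hy : ∀ e ∈ E, 0 < y e) (hq : 1 ≤ q) (e : {e : Sym2 V // e ∈ E}) :
    mass (prob E y q) (edgeOpen e) ≤ y e * mass (prob E y q) (edgeOpen e)ᶜ := by
  have hZ := Z_pos hy (one_pos.trans_le hq)
  refine mass_le_mul_mass_of_injOn (fun ω => (prob_pos hy (one_pos.trans_le hq) ω).le)
    (hy e e.2).le (f := closeEdge e) (fun ω _ => ?_) (injOn_closeEdge e) fun ω hω => ?_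
  · exact Bool.eq_false_iff.mp (closeEdge_self e ω)
  · rw [prob, prob, ← mul_div_assoc]
    gcongr
    exact weight_le_mul_weight_closeEdge hy hq hω

lemma mass_prob_pivotal_le (hy : ∀ e ∈ E, 0 < y e) (hq : 1 ≤ q) {A : Set (Config E)}
    (hA : Increasing A) (e : {e : Sym2 V // e ∈ E}) :
    mass (prob E y q) (A ∩ {ω | Pivotal A e ω}) ≤
      (1 + y e) * covariance (prob E y q) A (edgeOpen e) := by
  have hq₀ := one_pos.trans_le hq
  have hP₀ : 0 ≤ prob E y q := fun ω => (prob_pos hy hq₀ ω).le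
  have hye := hy e e.2
  have one_le : 1 ≤ (1 + y e) * mass (prob E y q) (edgeOpen e)ᶜ := by
    have total := mass_inter_add_mass_diff (prob E y q) Set.univ (edgeOpen e)
    rw [Set.univ_inter, ← Set.compl_eq_univ_sdiff, mass_prob_univ hy hq₀] at total
    linarith [mass_prob_edgeOpen_le hy hq e]
  have covariance_ge := mass_diff_mul_mass_compl_le hP₀ (prob_mul_prob_le hy hq)
    (hA.isUpperSet.preimage (closeEdge_mono e)) (isUpperSet_edgeOpen e)
    (fun ω hω => hA _ ω (closeEdge_le e ω) hω) (diff_closeEdge_preimage_subset A e)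
  rw [mass_prob_univ hy hq₀, one_mul, ← covariance] at covariance_ge
  rw [inter_pivotal_eq_diff hA]
  calc mass (prob E y q) (A \ closeEdge e ⁻¹' A)
      ≤ mass (prob E y q) (A \ closeEdge e ⁻¹' A) *
          ((1 + y e) * mass (prob E y q) (edgeOpen e)ᶜ) :=
        le_mul_of_one_le_right (mass_nonneg hP₀ _) one_le
    _ = (1 + y e) * (mass (prob E y q) (A \ closeEdge e ⁻¹' A) *
          mass (prob E y q) (edgeOpen e)ᶜ) := by ring
    _ ≤ _ := by gcongr

end Prob

section Russo

variable {V : Type*} [DecidableEq V] {E E' : Finset (Sym2 V)} {x : Sym2 V → ℝ} {q s : ℝ}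

lemma modWeights_pos (hx : ∀ e ∈ E, 0 < x e) (hs : 0 < s) : ∀ e ∈ E, 0 < modWeights E' x s e := by
  intro e he
  unfold modWeights
  split_ifs
  exacts [hs, hx e he]

/-- The number of open edges of `ω` that lie in `E'`. -/
def openCount (E' : Finset (Sym2 V)) (ω : Config E) : ℕ :=
  Finset.card {e : {e : Sym2 V // e ∈ E} | e.1 ∈ E' ∧ ω ∈ edgeOpen e}

lemma sum_mass_inter_edgeOpen (E' : Finset (Sym2 V)) (μ : Config E → ℝ) (A : Set (Config E)) :
    ∑ e : {e : Sym2 V // e ∈ E} with e.1 ∈ E', mass μ (A ∩ edgeOpen e) =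
      mass (fun ω => openCount E' ω * μ ω) A := by
  simp only [mass, openCount]
  rw [Finset.sum_comm]
  refine Finset.sum_congr rfl fun ω _ => ?_
  by_cases hω : ω ∈ A
  · simp [Set.indicator_apply, hω, Finset.card_filter, Finset.sum_filter, Finset.sum_mul, ite_and]
  · simp [hω]

lemma weight_modWeights (E' : Finset (Sym2 V)) (x : Sym2 V → ℝ) (q s : ℝ) (ω : Config E) :
    weight E (modWeights E' x s) q ω =
      s ^ openCount E' ω * weight E (modWeights E' x 1) q ω := by
  rw [weight_eq_mul_edgeWeight, weight_eq_mul_edgeWeight, mul_left_comm, openCount,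
    ← Finset.prod_const, Finset.prod_filter]
  simp only [edgeWeight, ← Finset.prod_mul_distrib]
  congr 1
  refine Finset.prod_congr rfl fun e _ => ?_
  by_cases he : e.1 ∈ E' <;> by_cases hω : ω e <;> simp [modWeights, edgeOpen, he, hω]

lemma hasDerivAt_weight (hs : s ≠ 0) (ω : Config E) :
    HasDerivAt (fun s => weight E (modWeights E' x s) q ω)
      (s⁻¹ * (openCount E' ω * weight E (modWeights E' x s) q ω)) s := by
  rw [funext fun s => weight_modWeights E' x q s ω, weight_modWeights E' x q s ω]
  refine ((hasDerivAt_pow (openCount E' ω) s).mul_const _).congr_deriv ?_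
  rcases Nat.eq_zero_or_pos (openCount E' ω) with h | h
  · simp [h]
  · rw [← mul_pow_sub_one h.ne' s]
    field_simp

lemma hasDerivAt_mass_weight (hs : s ≠ 0) (A : Set (Config E)) :
    HasDerivAt (fun s => mass (weight E (modWeights E' x s) q) A)
      (s⁻¹ * ∑ e : {e : Sym2 V // e ∈ E} with e.1 ∈ E',
        mass (weight E (modWeights E' x s) q) (A ∩ edgeOpen e)) s := by
  rw [sum_mass_inter_edgeOpen]
  simp only [mass, Finset.mul_sum, ← Set.indicator_const_mul]
  refine HasDerivAt.fun_sum fun ω _ => ?_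
  by_cases hω : ω ∈ A
  · simpa only [Set.indicator_of_mem hω] using hasDerivAt_weight hs ω
  · simpa only [Set.indicator_of_notMem hω] using hasDerivAt_const s (0 : ℝ)

lemma probOf_eq_mass (A : Set (Config E)) :
    probOf E E' x q s A = mass (prob E (modWeights E' x s) q) A :=
  rfl

lemma condPiv_eq_div (A : Set (Config E)) (e : {e : Sym2 V // e ∈ E}) :
    condPiv E E' x q s A e =
      probOf E E' x q s (A ∩ {ω | Pivotal A e ω}) / probOf E E' x q s A := by
  simp only [condPiv, probOf, Set.mem_inter_iff, Set.mem_ofPred_eq]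

lemma probOf_pos (hx : ∀ e ∈ E, 0 < x e) (hq : 0 < q) (hs : 0 < s) {A : Set (Config E)}
    (hA : A.Nonempty) : 0 < probOf E E' x q s A :=
  mass_pos (prob_pos (modWeights_pos hx hs) hq) hA

lemma hasDerivAt_probOf (hx : ∀ e ∈ E, 0 < x e) (hq : 0 < q) (hs : 0 < s) (A : Set (Config E)) :
    HasDerivAt (fun s => probOf E E' x q s A)
      (s⁻¹ * ∑ e : {e : Sym2 V // e ∈ E} with e.1 ∈ E',
        covariance (prob E (modWeights E' x s) q) A (edgeOpen e)) s := by
  have hZ := Z_pos (modWeights_pos (E' := E') hx hs) hq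
  have deriv_A := hasDerivAt_mass_weight (E' := E') (x := x) (q := q) hs.ne' A
  have deriv_Z := hasDerivAt_mass_weight (E := E) (E' := E') (x := x) (q := q) hs.ne' Set.univ
  simp only [mass_weight_univ, Set.univ_inter] at deriv_Z
  simp only [probOf_eq_mass, covariance, mass_prob]
  refine (deriv_A.fun_div deriv_Z hZ.ne').congr_deriv ?_
  simp only [Finset.sum_sub_distrib, ← Finset.mul_sum, ← Finset.sum_div]
  field_simp

lemma continuousAt_condPiv (hx : ∀ e ∈ E, 0 < x e) (hq : 0 < q) (hs : 0 < s)
    {A : Set (Config E)} (hA : A.Nonempty) (e : {e : Sym2 V // e ∈ E}) :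
    ContinuousAt (fun s => condPiv E E' x q s A e) s := by
  simp only [condPiv_eq_div]
  exact (hasDerivAt_probOf hx hq hs _).continuousAt.div (hasDerivAt_probOf hx hq hs A).continuousAt
    (probOf_pos hx hq hs hA).ne'

lemma condPiv_le [Finite V] (hx : ∀ e ∈ E, 0 < x e) (hq : 1 ≤ q) (hs : 0 < s)
    {A : Set (Config E)} (hA : A.Nonempty) (hAinc : Increasing A) {e : {e : Sym2 V // e ∈ E}}
    (he : e.1 ∈ E') :
    condPiv E E' x q s A e ≤ (1 + s) *
      (covariance (prob E (modWeights E' x s) q) A (edgeOpen e) / probOf E E' x q s A) := by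
  have hP := probOf_pos (E' := E') hx (one_pos.trans_le hq) hs hA
  have pivotal_le := mass_prob_pivotal_le (modWeights_pos (E' := E') hx hs) hq hAinc e
  rw [modWeights, if_pos he] at pivotal_le
  rw [condPiv_eq_div, ← mul_div_assoc]
  gcongr
  exact pivotal_le

lemma hasDerivAt_log_probOf (hx : ∀ e ∈ E, 0 < x e) (hq : 0 < q) (hs : 0 < s)
    {A : Set (Config E)} (hA : A.Nonempty) :
    HasDerivAt (fun s => Real.log (probOf E E' x q s A))
      (s⁻¹ * ∑ e : {e : Sym2 V // e ∈ E} with e.1 ∈ E',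
        covariance (prob E (modWeights E' x s) q) A (edgeOpen e) / probOf E E' x q s A) s := by
  refine ((hasDerivAt_probOf hx hq hs A).log (probOf_pos hx hq hs hA).ne').congr_deriv ?_
  rw [mul_div_assoc, Finset.sum_div]

lemma sum_condPiv_le [Finite V] (hx : ∀ e ∈ E, 0 < x e) (hq : 1 ≤ q) (hs : 0 < s)
    {A : Set (Config E)} (hA : A.Nonempty) (hAinc : Increasing A) :
    1 / (s * (1 + s)) *
        ∑ e : {e : Sym2 V // e ∈ E}, (if e.1 ∈ E' then condPiv E E' x q s A e else 0) ≤
      s⁻¹ * ∑ e : {e : Sym2 V // e ∈ E} with e.1 ∈ E',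
        covariance (prob E (modWeights E' x s) q) A (edgeOpen e) / probOf E E' x q s A := by
  rw [one_div, mul_inv, mul_assoc, inv_mul_eq_div (1 + s), ← Finset.sum_filter]
  gcongr
  rw [div_le_iff₀' (by positivity), Finset.mul_sum]
  exact Finset.sum_le_sum fun e he =>
    condPiv_le hx hq hs hA hAinc (Finset.mem_filter_univ e |>.mp he)

lemma continuousAt_sum_condPiv (hx : ∀ e ∈ E, 0 < x e) (hq : 0 < q) (hs : 0 < s)
    {A : Set (Config E)} (hA : A.Nonempty) :
    ContinuousAt (fun s => 1 / (s * (1 + s)) *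
      ∑ e : {e : Sym2 V // e ∈ E}, (if e.1 ∈ E' then condPiv E E' x q s A e else 0)) s := by
  refine ContinuousAt.mul (by fun_prop (disch := positivity)) ?_
  simp only [← Finset.sum_filter]
  exact tendsto_finsetSum _ fun e _ => continuousAt_condPiv hx hq hs hA e

end Russo

end RandomCluster

open RandomCluster in
theorem stmt2 {V : Type*} [Fintype V] [DecidableEq V] (E E' : Finset (Sym2 V)) (hE' : E' ⊆ E)
    (x : Sym2 V → ℝ) (hx : ∀ e ∈ E, 0 < x e) (q : ℝ) (hq : 1 ≤ q)
    (A : Set (Config E)) (hA : A.Nonempty) (hAinc : Increasing A)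
    (s₁ s₂ : ℝ) (hs₁ : 0 < s₁) (hs : s₁ < s₂) :
    probOf E E' x q s₂ A / probOf E E' x q s₁ A ≥
      Real.exp (∫ s in s₁..s₂,
        (1 / (s * (1 + s))) *
          ∑ e : {e : Sym2 V // e ∈ E}, (if e.1 ∈ E' then condPiv E E' x q s A e else 0)) := by
  have hq₀ : 0 < q := one_pos.trans_le hq
  have pos {s : ℝ} (h : s ∈ Set.Icc s₁ s₂) : 0 < s := hs₁.trans_le h.1
  have log_deriv {s : ℝ} (h : s ∈ Set.Icc s₁ s₂) :=
    hasDerivAt_log_probOf (E' := E') hx hq₀ (pos h) hA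
  have hP₁ := probOf_pos (E' := E') hx hq₀ hs₁ hA
  have hP₂ := probOf_pos (E' := E') hx hq₀ (hs₁.trans hs) hA
  rw [ge_iff_le, ← Real.le_log_iff_exp_le (div_pos hP₂ hP₁), Real.log_div hP₂.ne' hP₁.ne']
  exact intervalIntegral.integral_le_sub_of_hasDeriv_right_of_le hs.le
    (fun s h => (log_deriv h).continuousAt.continuousWithinAt)
    (fun s h => (log_deriv (Set.Ioo_subset_Icc_self h)).hasDerivWithinAt)
    (ContinuousOn.integrableOn_Icc fun s h =>
      (continuousAt_sum_condPiv hx hq₀ (pos h) hA).continuousWithinAt)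
    fun s h => sum_condPiv_le hx hq (pos (Set.Ioo_subset_Icc_self h)) hA hAinc
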